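/- Let (g,A) be a compatible pair over a field k of characteristic 0 and F an associative k-algebra such that [F,F] = F (F is perfect as a Lie algebra). Then (g,A)(F) = F ⊗ ⟨g⟩, where ⟨g⟩ = Σ_{n≥1} g^n is the associative subalgebra of A generated by g. -/

import Mathlib

open Submodule TensorProduct

variable (K : Type*) [Field K]

/-- The span of all products `a * b`, `a ∈ S`, `b ∈ T` (the subspace `S·T`). -/
def pSpan {R : Type*} [NonUnitalRing R] [Module K R] (S T : Submodule K R) : Submodule K R :=
  Submodule.span K {x | ∃ a ∈ S, ∃ b ∈ T, x = a * b}

/-- The span of all commutators `a * b - b * a`, `a ∈ S`, `b ∈ T` (the subspace `[S, T]`). -/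
def bSpan {R : Type*} [NonUnitalRing R] [Module K R] (S T : Submodule K R) : Submodule K R :=
  Submodule.span K {x | ∃ a ∈ S, ∃ b ∈ T, x = a * b - b * a}

/-- The `k`-th commutator space `S^(k)`: `S^(0) = S`, `S^(k) = [S, S^(k-1)]`.
For `S = ⊤` this is the commutator space `F^(k)` of the algebra. -/
def cSp {R : Type*} [NonUnitalRing R] [Module K R] (S : Submodule K R) : ℕ → Submodule K R
  | 0 => S
  | (k+1) => bSpan K S (cSp S k)

/-- `IklS K S ℓ k` is `I_k^ℓ(R, S)`: the sum of `S^(λ₁) ⋯ S^(λ_ℓ)` over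
`λ₁ + ⋯ + λ_ℓ = k`, defined via the recursion `I_k^1 = S^(k)`,
`I_k^ℓ = Σ_{0 ≤ i ≤ k} S^(i) · I_{k-i}^{ℓ-1}`.  The first argument is the
superscript `ℓ`, the second the subscript `k`; the (unused) value at `ℓ = 0` is `⊥`.
For `S = ⊤` this is `I_k^ℓ(F)`. -/
def IklS {R : Type*} [NonUnitalRing R] [Module K R] (S : Submodule K R) :
    ℕ → ℕ → Submodule K R
  | 0, _ => ⊥
  | 1, k => cSp K S k
  | (ℓ+2), k => ∑ i ∈ Finset.range (k+1), pSpan K (cSp K S i) (IklS S (ℓ+1) (k-i))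

/-- `I_k^{≤ℓ}(F) = Σ_{1 ≤ ℓ' ≤ ℓ} I_k^{ℓ'}(F)`. -/
def Ikle {R : Type*} [NonUnitalRing R] [Module K R] (ℓ k : ℕ) : Submodule K R :=
  ∑ ℓ' ∈ Finset.Icc 1 ℓ, IklS K (⊤ : Submodule K R) ℓ' k

/-- `I_k(F) = Σ_{ℓ ≥ 1} I_k^ℓ(F)`. -/
def Ik (R : Type*) [NonUnitalRing R] [Module K R] (k : ℕ) : Submodule K R :=
  ⨆ ℓ : ℕ, IklS K (⊤ : Submodule K R) (ℓ + 1) k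

/-- `g^n`: the span of all products of `n` elements of `g` (set to `⊥` for `n = 0`). -/
def gPow {R : Type*} [NonUnitalRing R] [Module K R] (g : Submodule K R) : ℕ → Submodule K R
  | 0 => ⊥
  | 1 => g
  | (n+2) => pSpan K g (gPow g (n+1))

/-- The Lie subalgebra (under the commutator bracket) generated by a subspace `S`:
the smallest subspace containing `S` and closed under `(x, y) ↦ x * y - y * x`. -/
def lieGen {R : Type*} [NonUnitalRing R] [Module K R] (S : Submodule K R) : Submodule K R :=
  sInf {T | S ≤ T ∧ ∀ x ∈ T, ∀ y ∈ T, x * y - y * x ∈ T}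

/-- The subspace `S ⊗ T` of `F ⊗[K] A`: the span of all pure tensors `f ⊗ a`
with `f ∈ S`, `a ∈ T`. -/
def tSpan {F A : Type*} [AddCommGroup F] [Module K F] [AddCommGroup A] [Module K A]
    (S : Submodule K F) (T : Submodule K A) : Submodule K (F ⊗[K] A) :=
  Submodule.span K {z | ∃ f ∈ S, ∃ a ∈ T, z = f ⊗ₜ[K] a}

/-- The current Lie algebra `(g, A)(F)`: the Lie subalgebra of `F ⊗ A` (with the
commutator bracket) generated by `F ⊗ g`. -/
def currentLie {F A : Type*} [NonUnitalRing F] [Module K F] [SMulCommClass K F F]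
    [IsScalarTower K F F] [Ring A] [Algebra K A] (g : Submodule K A) :
    Submodule K (F ⊗[K] A) :=
  lieGen K (tSpan K (⊤ : Submodule K F) g)

/-!
For `p q r : F` and `x y : A`, the two brackets below contain the same term `r * p * q ⊗ y * x`,
so

  `[p * q ⊗ x, r ⊗ y] - [q ⊗ x, r * p ⊗ y] = [p, q * r] ⊗ x * y`.

If `[F, F] = F`, then also `F * F = F`, so the commutators `[p, q * r]` span `F`. Hence, for every
subspace `T` of `F ⊗ A` that is closed under commutators, the elements `a` with `F ⊗ a ⊆ T` form an
associative subalgebra of `A`; for `T = (g, A)(F)` this subalgebra contains `g`.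
-/

section Products

variable {K} {R : Type*} [NonUnitalRing R] [Module K R] {S T U P : Submodule K R}

theorem mul_mem_pSpan {a b : R} (ha : a ∈ S) (hb : b ∈ T) : a * b ∈ pSpan K S T :=
  subset_span ⟨a, ha, b, hb, rfl⟩

theorem pSpan_le : pSpan K S T ≤ P ↔ ∀ a ∈ S, ∀ b ∈ T, a * b ∈ P := by
  refine ⟨fun h a ha b hb ↦ h (mul_mem_pSpan ha hb), fun h ↦ span_le.2 ?_⟩
  rintro _ ⟨a, ha, b, hb, rfl⟩
  exact h a ha b hb

theorem bSpan_le : bSpan K S T ≤ P ↔ ∀ a ∈ S, ∀ b ∈ T, a * b - b * a ∈ P := by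
  refine ⟨fun h a ha b hb ↦ h (subset_span ⟨a, ha, b, hb, rfl⟩), fun h ↦ span_le.2 ?_⟩
  rintro _ ⟨a, ha, b, hb, rfl⟩
  exact h a ha b hb

theorem bSpan_self_le_pSpan_self : bSpan K S S ≤ pSpan K S S :=
  bSpan_le.2 fun _ ha _ hb ↦ sub_mem (mul_mem_pSpan ha hb) (mul_mem_pSpan hb ha)

theorem pSpan_top_eq_top_of_bSpan_top_eq_top (h : bSpan K (⊤ : Submodule K R) ⊤ = ⊤) :
    pSpan K (⊤ : Submodule K R) ⊤ = ⊤ :=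
  top_le_iff.1 (h.ge.trans bSpan_self_le_pSpan_self)

variable [SMulCommClass K R R] [IsScalarTower K R R]

theorem bSpan_pSpan_le :
    bSpan K S (pSpan K T U) ≤ P ↔ ∀ a ∈ S, ∀ b ∈ T, ∀ c ∈ U, a * (b * c) - b * c * a ∈ P :=
  bSpan_le.trans <| forall₂_congr fun a _ ↦
    pSpan_le (P := P.comap (LinearMap.mulLeft K a - LinearMap.mulRight K a))

end Products

section Powers

variable {K} {R : Type*} [NonUnitalRing R] [Module K R] [IsScalarTower K R R]
  {g : Submodule K R}

theorem mul_mem_gPow (m n : ℕ) {x y : R} (hx : x ∈ gPow K g (m + 1)) (hy : y ∈ gPow K g (n + 1)) :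
    x * y ∈ gPow K g (m + n + 1 + 1) := by
  induction m generalizing x with
  | zero =>
    rw [zero_add]
    exact mul_mem_pSpan hx hy
  | succ m ih =>
    rw [Nat.add_right_comm m 1 n]
    suffices h : pSpan K g (gPow K g (m + 1)) ≤
        (gPow K g (m + n + 1 + 1 + 1)).comap (LinearMap.mulRight K y) from h hx
    refine pSpan_le.2 fun a ha b hb ↦ ?_
    rw [mem_comap, LinearMap.mulRight_apply, mul_assoc]
    exact mul_mem_pSpan ha (ih hb)

theorem exists_mem_gPow_of_mem_closure {x : R} (hx : x ∈ Subsemigroup.closure (g : Set R)) :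
    ∃ n, x ∈ gPow K g (n + 1) := by
  induction hx using Subsemigroup.closure_induction with
  | mem x hx => exact ⟨0, hx⟩
  | mul x y _ _ ihx ihy =>
    obtain ⟨m, hm⟩ := ihx
    obtain ⟨n, hn⟩ := ihy
    exact ⟨m + n + 1, mul_mem_gPow m n hm hn⟩

variable [SMulCommClass K R R]

theorem gPow_succ_le_adjoin (n : ℕ) :
    gPow K g (n + 1) ≤ (NonUnitalAlgebra.adjoin K (g : Set R)).toSubmodule := by
  induction n with
  | zero => exact NonUnitalAlgebra.subset_adjoin K
  | succ n ih =>
    exact pSpan_le.2 fun _ ha _ hb ↦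
      (NonUnitalAlgebra.adjoin K _).mul_mem (NonUnitalAlgebra.subset_adjoin K ha) (ih hb)

theorem iSup_gPow_eq_adjoin :
    ⨆ n : ℕ, gPow K g (n + 1) = (NonUnitalAlgebra.adjoin K (g : Set R)).toSubmodule := by
  refine le_antisymm (iSup_le gPow_succ_le_adjoin) ?_
  rw [NonUnitalAlgebra.adjoin_eq_span, span_le]
  intro x hx
  obtain ⟨n, hn⟩ := exists_mem_gPow_of_mem_closure hx
  exact mem_iSup_of_mem (p := fun n ↦ gPow K g (n + 1)) n hn

end Powers

section LieGen

variable {K} {R : Type*} [NonUnitalRing R] [Module K R] {S T : Submodule K R}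

theorem le_lieGen : S ≤ lieGen K S :=
  le_sInf fun _ hT ↦ hT.1

theorem commutator_mem_lieGen {x y : R} (hx : x ∈ lieGen K S) (hy : y ∈ lieGen K S) :
    x * y - y * x ∈ lieGen K S :=
  mem_sInf.2 fun T hT ↦ hT.2 x (mem_sInf.1 hx T hT) y (mem_sInf.1 hy T hT)

theorem lieGen_le (hST : S ≤ T) (hT : ∀ x ∈ T, ∀ y ∈ T, x * y - y * x ∈ T) : lieGen K S ≤ T :=
  sInf_le ⟨hST, hT⟩

end LieGen

section Tensor

variable {K} {F A : Type*}

section Module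

variable [AddCommGroup F] [Module K F] [AddCommGroup A] [Module K A]

theorem tmul_mem_tSpan {S : Submodule K F} {T : Submodule K A} {f : F} {a : A}
    (hf : f ∈ S) (ha : a ∈ T) : f ⊗ₜ[K] a ∈ tSpan K S T :=
  subset_span ⟨f, hf, a, ha, rfl⟩

theorem tSpan_le {S : Submodule K F} {T : Submodule K A} {P : Submodule K (F ⊗[K] A)} :
    tSpan K S T ≤ P ↔ ∀ f ∈ S, ∀ a ∈ T, f ⊗ₜ[K] a ∈ P := by
  refine ⟨fun h f hf a ha ↦ h (tmul_mem_tSpan hf ha), fun h ↦ span_le.2 ?_⟩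
  rintro _ ⟨f, hf, a, ha, rfl⟩
  exact h f hf a ha

theorem tSpan_mono_right {S : Submodule K F} {T T' : Submodule K A} (h : T ≤ T') :
    tSpan K S T ≤ tSpan K S T' :=
  tSpan_le.2 fun _ hf _ ha ↦ tmul_mem_tSpan hf (h ha)

/-- The largest subspace `B` of `A` such that `F ⊗ B` is contained in `P`. It reduces an inclusion
`F ⊗ ⟨g⟩ ≤ P` to the closure of a subspace of `A` under multiplication. -/
def coefficientSpace (P : Submodule K (F ⊗[K] A)) : Submodule K A :=
  ⨅ f : F, P.comap (TensorProduct.mk K F A f)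

theorem mem_coefficientSpace {P : Submodule K (F ⊗[K] A)} {a : A} :
    a ∈ coefficientSpace P ↔ ∀ f : F, f ⊗ₜ[K] a ∈ P := by
  simp [coefficientSpace]

theorem tSpan_top_le_iff_le_coefficientSpace {B : Submodule K A} {P : Submodule K (F ⊗[K] A)} :
    tSpan K (⊤ : Submodule K F) B ≤ P ↔ B ≤ coefficientSpace P :=
  tSpan_le.trans ⟨fun h a ha ↦ mem_coefficientSpace.2 fun f ↦ h f mem_top a ha,
    fun h f _ _ ha ↦ mem_coefficientSpace.1 (h ha) f⟩

end Module

variable [NonUnitalRing F] [Module K F] [SMulCommClass K F F] [IsScalarTower K F F]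
  [NonUnitalRing A] [Module K A] [SMulCommClass K A A] [IsScalarTower K A A]

theorem mul_mem_tSpan {C : NonUnitalSubalgebra K F} {B : NonUnitalSubalgebra K A}
    {z w : F ⊗[K] A} (hz : z ∈ tSpan K C.toSubmodule B.toSubmodule)
    (hw : w ∈ tSpan K C.toSubmodule B.toSubmodule) :
    z * w ∈ tSpan K C.toSubmodule B.toSubmodule := by
  induction hz, hw using span_induction₂ with
  | mem_mem _ _ hz hw =>
    obtain ⟨f, hf, a, ha, rfl⟩ := hz
    obtain ⟨f', hf', a', ha', rfl⟩ := hw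
    rw [Algebra.TensorProduct.tmul_mul_tmul]
    exact tmul_mem_tSpan (C.mul_mem hf hf') (B.mul_mem ha ha')
  | zero_left => simp
  | zero_right => simp
  | add_left _ _ _ _ _ _ h h' => rw [add_mul]; exact add_mem h h'
  | add_right _ _ _ _ _ _ h h' => rw [mul_add]; exact add_mem h h'
  | smul_left c _ _ _ _ h => rw [smul_mul_assoc]; exact smul_mem _ c h
  | smul_right c _ _ _ _ h => rw [mul_smul_comm]; exact smul_mem _ c h

theorem commutator_sub_commutator_tmul (p q r : F) (x y : A) :
    ((p * q) ⊗ₜ[K] x * r ⊗ₜ[K] y - r ⊗ₜ[K] y * (p * q) ⊗ₜ[K] x) -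
        (q ⊗ₜ[K] x * (r * p) ⊗ₜ[K] y - (r * p) ⊗ₜ[K] y * q ⊗ₜ[K] x) =
      (p * (q * r) - q * r * p) ⊗ₜ[K] (x * y) := by
  simp only [Algebra.TensorProduct.tmul_mul_tmul, sub_tmul, mul_assoc]
  abel

theorem mul_mem_coefficientSpace (hF : bSpan K (⊤ : Submodule K F) ⊤ = ⊤)
    {P : Submodule K (F ⊗[K] A)} (hP : ∀ z ∈ P, ∀ w ∈ P, z * w - w * z ∈ P) {x y : A}
    (hx : x ∈ coefficientSpace P) (hy : y ∈ coefficientSpace P) :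
    x * y ∈ coefficientSpace P := by
  rw [mem_coefficientSpace] at hx hy ⊢
  have spanned_by_commutators : bSpan K (⊤ : Submodule K F) (pSpan K ⊤ ⊤) = ⊤ := by
    rw [pSpan_top_eq_top_of_bSpan_top_eq_top hF, hF]
  suffices h : bSpan K (⊤ : Submodule K F) (pSpan K ⊤ ⊤) ≤
      P.comap ((TensorProduct.mk K F A).flip (x * y))
    from fun _ ↦ h (spanned_by_commutators.ge mem_top)
  refine bSpan_pSpan_le.2 fun p _ q _ r _ ↦ ?_
  rw [mem_comap, LinearMap.flip_apply, mk_apply, ← commutator_sub_commutator_tmul]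
  exact sub_mem (hP _ (hx _) _ (hy _)) (hP _ (hx _) _ (hy _))

theorem adjoin_le_coefficientSpace (hF : bSpan K (⊤ : Submodule K F) ⊤ = ⊤)
    {P : Submodule K (F ⊗[K] A)} (hP : ∀ z ∈ P, ∀ w ∈ P, z * w - w * z ∈ P) {g : Submodule K A}
    (hg : g ≤ coefficientSpace P) :
    (NonUnitalAlgebra.adjoin K (g : Set A)).toSubmodule ≤ coefficientSpace P :=
  NonUnitalAlgebra.adjoin_le
    (S := { coefficientSpace P with mul_mem' := mul_mem_coefficientSpace hF hP }) hg

theorem lieGen_tSpan_top_le_tSpan_adjoin (g : Submodule K A) :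
    lieGen K (tSpan K (⊤ : Submodule K F) g) ≤
      tSpan K ⊤ (NonUnitalAlgebra.adjoin K (g : Set A)).toSubmodule :=
  lieGen_le (tSpan_mono_right (NonUnitalAlgebra.subset_adjoin K)) fun _ hz _ hw ↦
    sub_mem (mul_mem_tSpan (C := ⊤) hz hw) (mul_mem_tSpan (C := ⊤) hw hz)

theorem tSpan_adjoin_le_lieGen_tSpan_top (hF : bSpan K (⊤ : Submodule K F) ⊤ = ⊤)
    (g : Submodule K A) :
    tSpan K ⊤ (NonUnitalAlgebra.adjoin K (g : Set A)).toSubmodule ≤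
      lieGen K (tSpan K (⊤ : Submodule K F) g) :=
  tSpan_top_le_iff_le_coefficientSpace.2 <|
    adjoin_le_coefficientSpace hF (fun _ hz _ hw ↦ commutator_mem_lieGen hz hw)
      (tSpan_top_le_iff_le_coefficientSpace.1 le_lieGen)

theorem statement5_general (g : Submodule K A) (hperfect : bSpan K (⊤ : Submodule K F) ⊤ = ⊤) :
    lieGen K (tSpan K (⊤ : Submodule K F) g) = tSpan K ⊤ (⨆ n : ℕ, gPow K g (n + 1)) := by
  rw [iSup_gPow_eq_adjoin]
  exact le_antisymm (lieGen_tSpan_top_le_tSpan_adjoin g)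
    (tSpan_adjoin_le_lieGen_tSpan_top hperfect g)

end Tensor

/-- if `[F,F] = F`, then `(g,A)(F) = F ⊗ ⟨g⟩` where `⟨g⟩ = Σ_{n ≥ 1} g^n`. -/
theorem statement5 {K : Type*} [Field K] [CharZero K]
    {F : Type*} [NonUnitalRing F] [Module K F] [SMulCommClass K F F] [IsScalarTower K F F]
    {A : Type*} [Ring A] [Algebra K A]
    (g : Submodule K A) (hg : ∀ x ∈ g, ∀ y ∈ g, x * y - y * x ∈ g)
    (hperfect : bSpan K (⊤ : Submodule K F) ⊤ = ⊤) :
    currentLie K (F := F) g = tSpan K (⊤ : Submodule K F) (⨆ n : ℕ, gPow K g (n + 1)) :=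
  statement5_general g hperfect
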